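/- arXiv:2601.14828 — 5 statements merged into one kernel-verified Lean document; each statement's English description precedes it below -/
import Mathlib

section
/- Let x₁₁, x₁₂, x₂₁, x₂₂ be real numbers satisfying x₁₁·x₂₂ + x₁₂·x₂₁ = 1, and let a be a complex number with b = Im(a) and c = Re(a). Define Num = (x₁₁ − b·x₁₂ − c·x₂₂)² + (x₂₁ + b·x₂₂ − c·x₁₂)², Den = (x₁₁ − b·x₁₂ + c·x₂₂)² + (x₂₁ + b·x₂₂ + c·x₁₂)², and D = (x₁₁ − b·x₁₂)² + (c·x₁₂)² + (x₂₁ + b·x₂₂)² + (c·x₂₂)² + 2c. If Den ≠ 0, then Num/Den = 1 − 4c/D. -/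
/-!
Put `u = (x11 - b * x12, x21 + b * x22)` and `w = (x22, x12)`. The numerator and the denominator of
the reflectance are the squared lengths of `u - c • w` and `u + c • w`, so by polarization they
differ by `4 * c` times the dot product `u ⬝ w`. As `(-x12, x22)` is orthogonal to `w`, the terms in
`b` cancel and `u ⬝ w` is the determinant `x11 * x22 + x12 * x21`.
-/

section CommRing

variable {R : Type*} [CommRing R]

theorem add_sq_add_add_sq_eq (p q r s : R) :
    (p + r) ^ 2 + (q + s) ^ 2 = p ^ 2 + q ^ 2 + (r ^ 2 + s ^ 2) + 2 * (p * r + q * s) := by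
  ring

theorem sub_sq_add_sub_sq_eq (p q r s : R) :
    (p - r) ^ 2 + (q - s) ^ 2 = (p + r) ^ 2 + (q + s) ^ 2 - 4 * (p * r + q * s) := by
  ring

theorem shear_dot_eq_mul_det (b c x11 x12 x21 x22 : R) :
    (x11 - b * x12) * (c * x22) + (x21 + b * x22) * (c * x12)
      = c * (x11 * x22 + x12 * x21) := by
  ring

end CommRing

section Field

variable {K : Type*} [Field K]

theorem sub_sq_add_sub_sq_div_add_sq_add_add_sq {p q r s : K}
    (h : (p + r) ^ 2 + (q + s) ^ 2 ≠ 0) :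
    ((p - r) ^ 2 + (q - s) ^ 2) / ((p + r) ^ 2 + (q + s) ^ 2)
      = 1 - 4 * (p * r + q * s) / ((p + r) ^ 2 + (q + s) ^ 2) := by
  rw [sub_sq_add_sub_sq_eq, sub_div, div_self h]

theorem reflectance_reformulation_general (b c x11 x12 x21 x22 : K)
    (hDen : (x11 - b * x12 + c * x22) ^ 2 + (x21 + b * x22 + c * x12) ^ 2 ≠ 0) :
    ((x11 - b * x12 - c * x22) ^ 2 + (x21 + b * x22 - c * x12) ^ 2)
      / ((x11 - b * x12 + c * x22) ^ 2 + (x21 + b * x22 + c * x12) ^ 2)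
      = 1 - 4 * (c * (x11 * x22 + x12 * x21)) /
        ((x11 - b * x12) ^ 2 + (c * x12) ^ 2 + (x21 + b * x22) ^ 2 + (c * x22) ^ 2
          + 2 * (c * (x11 * x22 + x12 * x21))) := by
  have den_eq : (x11 - b * x12 + c * x22) ^ 2 + (x21 + b * x22 + c * x12) ^ 2
      = (x11 - b * x12) ^ 2 + (c * x12) ^ 2 + (x21 + b * x22) ^ 2 + (c * x22) ^ 2
        + 2 * (c * (x11 * x22 + x12 * x21)) := by
    rw [add_sq_add_add_sq_eq, shear_dot_eq_mul_det]
    abel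
  rw [sub_sq_add_sub_sq_div_add_sq_add_add_sq hDen, shear_dot_eq_mul_det, den_eq]

end Field

/-- Reformulation of the reflectance: under the determinant-one condition,
`R = Num/Den = 1 - 4 Re(a) / D`. -/
theorem reflectance_reformulation (x11 x12 x21 x22 : ℝ)
    (hdet : x11 * x22 + x12 * x21 = 1) (a : ℂ)
    (hDen : (x11 - a.im * x12 + a.re * x22) ^ 2
        + (x21 + a.im * x22 + a.re * x12) ^ 2 ≠ 0) :
    ((x11 - a.im * x12 - a.re * x22) ^ 2 + (x21 + a.im * x22 - a.re * x12) ^ 2)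
      / ((x11 - a.im * x12 + a.re * x22) ^ 2 + (x21 + a.im * x22 + a.re * x12) ^ 2)
      = 1 - 4 * a.re /
        ((x11 - a.im * x12) ^ 2 + (a.re * x12) ^ 2
          + (x21 + a.im * x22) ^ 2 + (a.re * x22) ^ 2 + 2 * a.re) := by
  simpa only [hdet, mul_one] using
    reflectance_reformulation_general a.im a.re x11 x12 x21 x22 hDen
end

section
/- Let x₁₁, x₁₂, x₂₁, x₂₂ be real numbers satisfying x₁₁·x₂₂ + x₁₂·x₂₁ = 1, and let a be a complex number with Re(a) > 0; write b = Im(a), c = Re(a). Define Num = (x₁₁ − b·x₁₂ − c·x₂₂)² + (x₂₁ + b·x₂₂ − c·x₁₂)² and Den = (x₁₁ − b·x₁₂ + c·x₂₂)² + (x₂₁ + b·x₂₂ + c·x₁₂)². Then Den ≥ 2c > 0, and the reflectance R = Num/Den satisfies 0 ≤ R < 1. -/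
/-! With `z = x11 + i x21` and `w = x22 + i x12`, the numerator is `‖z - conj a * w‖ ^ 2`, the
denominator is `‖z + a * w‖ ^ 2`, and the determinant is `Re ⟪z, w⟫`. Expanding the two squares,
only the cross terms differ, and `Im a` cancels from their difference `4 * Re a * Re ⟪z, w⟫`. -/

open RCLike ComplexConjugate InnerProductSpace

section InnerProductSpace

variable {𝕜 E : Type*} [RCLike 𝕜] [SeminormedAddCommGroup E] [InnerProductSpace 𝕜 E]

theorem norm_add_smul_sq_eq_norm_sub_conj_smul_sq_add (a : 𝕜) (z w : E) :
    ‖z + a • w‖ ^ 2 = ‖z - conj a • w‖ ^ 2 + 4 * (re a * re ⟪z, w⟫_𝕜) := by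
  have cross_terms : re (a * ⟪z, w⟫_𝕜) + re (conj a * ⟪z, w⟫_𝕜) = 2 * (re a * re ⟪z, w⟫_𝕜) := by
    simp only [mul_re, conj_re, conj_im]
    ring
  rw [norm_add_sq (𝕜 := 𝕜), norm_sub_sq (𝕜 := 𝕜), inner_smul_right, inner_smul_right,
    norm_smul, norm_smul, norm_conj]
  linear_combination 2 * cross_terms

theorem reflectance_bounds_general (a : 𝕜) (z w : E) (h : 0 < re a * re ⟪z, w⟫_𝕜) :
    4 * (re a * re ⟪z, w⟫_𝕜) ≤ ‖z + a • w‖ ^ 2 ∧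
      0 ≤ ‖z - conj a • w‖ ^ 2 / ‖z + a • w‖ ^ 2 ∧
      ‖z - conj a • w‖ ^ 2 / ‖z + a • w‖ ^ 2 < 1 := by
  have den_eq := norm_add_smul_sq_eq_norm_sub_conj_smul_sq_add a z w
  have num_nonneg : 0 ≤ ‖z - conj a • w‖ ^ 2 := sq_nonneg _
  have den_pos : 0 < ‖z + a • w‖ ^ 2 := by linarith
  exact ⟨by linarith, div_nonneg num_nonneg den_pos.le, (div_lt_one den_pos).2 (by linarith)⟩

end InnerProductSpace

section Coordinates

variable (x11 x12 x21 x22 : ℝ)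

theorem norm_mk_add_smul_mk_sq (a : ℂ) :
    ‖(⟨x11, x21⟩ : ℂ) + a • (⟨x22, x12⟩ : ℂ)‖ ^ 2 =
      (x11 - a.im * x12 + a.re * x22) ^ 2 + (x21 + a.im * x22 + a.re * x12) ^ 2 := by
  simp only [Complex.sq_norm, Complex.normSq_apply, smul_eq_mul, Complex.add_re, Complex.add_im,
    Complex.mul_re, Complex.mul_im]
  ring

theorem norm_mk_sub_conj_smul_mk_sq (a : ℂ) :
    ‖(⟨x11, x21⟩ : ℂ) - conj a • (⟨x22, x12⟩ : ℂ)‖ ^ 2 =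
      (x11 - a.im * x12 - a.re * x22) ^ 2 + (x21 + a.im * x22 - a.re * x12) ^ 2 := by
  simpa [← sub_eq_add_neg] using norm_mk_add_smul_mk_sq x11 x12 x21 x22 (-conj a)

theorem re_inner_mk_mk :
    (⟪(⟨x11, x21⟩ : ℂ), (⟨x22, x12⟩ : ℂ)⟫_ℂ).re = x11 * x22 + x12 * x21 := by
  simp [mul_comm]

end Coordinates

/-- For a physical substrate (`Re(a) > 0`) and a determinant-one cumulative
transfer matrix, the reflectance denominator satisfies `Den ≥ 2 Re(a) > 0`,
and the reflectance `R = Num/Den` satisfies `0 ≤ R < 1`. -/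
theorem reflectance_bounds (x11 x12 x21 x22 : ℝ)
    (hdet : x11 * x22 + x12 * x21 = 1) (a : ℂ) (ha : 0 < a.re) :
    (0 < 2 * a.re ∧
      2 * a.re ≤ (x11 - a.im * x12 + a.re * x22) ^ 2
        + (x21 + a.im * x22 + a.re * x12) ^ 2) ∧
    (0 ≤ ((x11 - a.im * x12 - a.re * x22) ^ 2 + (x21 + a.im * x22 - a.re * x12) ^ 2)
        / ((x11 - a.im * x12 + a.re * x22) ^ 2 + (x21 + a.im * x22 + a.re * x12) ^ 2)
      ∧ ((x11 - a.im * x12 - a.re * x22) ^ 2 + (x21 + a.im * x22 - a.re * x12) ^ 2)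
        / ((x11 - a.im * x12 + a.re * x22) ^ 2 + (x21 + a.im * x22 + a.re * x12) ^ 2)
        < 1) := by
  have bounds := reflectance_bounds_general a (⟨x11, x21⟩ : ℂ) (⟨x22, x12⟩ : ℂ)
  simp only [re_to_complex, re_inner_mk_mk, hdet, mul_one, norm_mk_add_smul_mk_sq,
    norm_mk_sub_conj_smul_mk_sq] at bounds
  exact ⟨⟨by linarith, by linarith [(bounds ha).1]⟩, (bounds ha).2⟩
end

section
/- Let l, u ∈ ℝ⁴ with l ≤ u componentwise, and let 𝒳 = {x ∈ ℝ⁴ : lᵢ ≤ xᵢ ≤ uᵢ for i = 1,…,4 and x₁x₂ + x₃x₄ = 1}. Then every extreme point x of the convex hull of 𝒳 satisfies: either (x₁ ∈ {l₁, u₁} and x₂ ∈ {l₂, u₂}), or (x₃ ∈ {l₃, u₃} and x₄ ∈ {l₄, u₄}). -/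
/-!
An extreme point of the convex hull of `s` is never the midpoint of a nontrivial segment in `s`.
If a coordinate `i` of the pair `(x 0, x 1)` and a coordinate `j` of the pair `(x 2, x 3)` both lie
strictly between their bounds, then `x 0 * x 1 + x 2 * x 3` is affine in these two coordinates,
hence constant along some line through `x` in the `(i, j)`-plane, and near `x` that line stays in
the box. So one of the two coordinates is at a bound, for each of the four choices of `(i, j)`, and
distributing the disjunction over the conjunctions gives the corner description.
-/

open Filter Set Topology

variable {𝕜 : Type*}

lemma exists_ne_zero_mul_add_mul_eq_zero [CommRing 𝕜] [Nontrivial 𝕜] (α β : 𝕜) :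
    ∃ p q : 𝕜, (p ≠ 0 ∨ q ≠ 0) ∧ p * α + q * β = 0 := by
  by_cases h : α = 0 ∧ β = 0
  · exact ⟨1, 0, .inl one_ne_zero, by simp [h]⟩
  · refine ⟨β, -α, ?_, by ring⟩
    rwa [neg_ne_zero, or_comm, ← not_and_or]

lemma eq_or_eq_of_mem_Icc_of_notMem_interior [LinearOrder 𝕜] [TopologicalSpace 𝕜]
    [OrderClosedTopology 𝕜] {a b x : 𝕜} (hx : x ∈ Icc a b) (hint : x ∉ interior (Icc a b)) :
    x = a ∨ x = b := by
  have hIoo : x ∉ Ioo a b := fun h => hint (interior_maximal Ioo_subset_Icc_self isOpen_Ioo h)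
  simpa only [hIoo, or_false] using eq_endpoints_or_mem_Ioo_of_mem_Icc hx

lemma eventually_add_smul_mem_pi [Semiring 𝕜] [TopologicalSpace 𝕜] [IsTopologicalSemiring 𝕜]
    {ι : Type*} {S : ι → Set 𝕜} {x v : ι → 𝕜} (hx : ∀ k, x k ∈ S k)
    (hfin : (Function.support v).Finite) (hv : ∀ k ∈ Function.support v, x k ∈ interior (S k)) :
    ∀ᶠ t : 𝕜 in 𝓝 0, ∀ k, (x + t • v) k ∈ S k := by
  have hmoving : ∀ᶠ t : 𝕜 in 𝓝 0, ∀ k ∈ Function.support v, x k + t * v k ∈ S k := by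
    refine (eventually_all_finite hfin).mpr fun k hk => ?_
    have hlim : Tendsto (fun t : 𝕜 => x k + t * v k) (𝓝 0) (𝓝 (x k)) :=
      Continuous.tendsto' (by fun_prop) _ _ (by simp)
    exact hlim.eventually (mem_interior_iff_mem_nhds.mp (hv k hk))
  filter_upwards [hmoving] with t ht k
  by_cases hk : k ∈ Function.support v
  · exact ht k hk
  · simpa [Function.notMem_support.mp hk] using hx k

lemma eq_zero_of_mem_extremePoints_of_add_mem_of_sub_mem [Ring 𝕜] [LinearOrder 𝕜]
    [IsStrictOrderedRing 𝕜] [Invertible (2 : 𝕜)] {E : Type*} [AddCommGroup E] [Module 𝕜 E]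
    {s : Set E} {x v : E} (hx : x ∈ s.extremePoints 𝕜) (hadd : x + v ∈ s) (hsub : x - v ∈ s) :
    v = 0 :=
  add_eq_left.mp (hx.2 hadd hsub (mem_openSegment_add_sub x v))

section OrderedField

variable [Field 𝕜] [LinearOrder 𝕜] [IsStrictOrderedRing 𝕜]

section OrderTopology

variable [TopologicalSpace 𝕜] [OrderTopology 𝕜]

lemma eq_zero_of_mem_extremePoints_of_eventually_add_smul_mem {E : Type*} [AddCommGroup E]
    [Module 𝕜 E] {s : Set E} {x v : E} (hx : x ∈ s.extremePoints 𝕜)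
    (hv : ∀ᶠ t : 𝕜 in 𝓝 0, x + t • v ∈ s) : v = 0 := by
  have hv_neg : ∀ᶠ t : 𝕜 in 𝓝 0, x + (-t) • v ∈ s :=
    (continuous_neg.tendsto' 0 0 neg_zero).eventually hv
  obtain ⟨t, ⟨hadd, hsub⟩, ht : 0 < t⟩ :=
    ((hv.and hv_neg).filter_mono nhdsWithin_le_nhds |>.and
      (self_mem_nhdsWithin : Ioi (0 : 𝕜) ∈ 𝓝[>] 0)).exists
  rw [neg_smul, ← sub_eq_add_neg] at hsub
  have htv : t • v = 0 := eq_zero_of_mem_extremePoints_of_add_mem_of_sub_mem hx hadd hsub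
  exact (smul_eq_zero.mp htv).resolve_left ht.ne'

lemma notMem_interior_or_notMem_interior_of_mem_extremePoints {ι : Type*} [DecidableEq ι]
    {S : ι → Set 𝕜} {f : (ι → 𝕜) → 𝕜} {c : 𝕜} {x : ι → 𝕜}
    (hx : x ∈ (convexHull 𝕜 {y | (∀ k, y k ∈ S k) ∧ f y = c}).extremePoints 𝕜)
    {i j : ι} (hij : i ≠ j) {α β : 𝕜}
    (hf : ∀ p q, f (x + (Pi.single i p + Pi.single j q)) = f x + (p * α + q * β)) :
    x i ∉ interior (S i) ∨ x j ∉ interior (S j) := by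
  by_contra! hint
  obtain ⟨hxS, hfx⟩ := extremePoints_convexHull_subset hx
  obtain ⟨p, q, hpq, hker⟩ := exists_ne_zero_mul_add_mul_eq_zero α β
  set v : ι → 𝕜 := Pi.single i p + Pi.single j q with hv
  have hsupp : Function.support v ⊆ {i, j} :=
    (Function.support_add _ _).trans
      (union_subset_union Pi.support_single_subset Pi.support_single_subset)
  have hfree : ∀ k ∈ Function.support v, x k ∈ interior (S k) := by
    intro k hk
    rcases hsupp hk with rfl | rfl
    exacts [hint.1, hint.2]
  have hlevel (t : 𝕜) : f (x + t • v) = c := by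
    rw [hv, smul_add, ← Pi.single_smul, ← Pi.single_smul, smul_eq_mul, smul_eq_mul, hf]
    linear_combination hfx + t * hker
  have hv_zero : v = 0 := by
    refine eq_zero_of_mem_extremePoints_of_eventually_add_smul_mem hx ?_
    filter_upwards [eventually_add_smul_mem_pi hxS ((toFinite _).subset hsupp) hfree] with t ht
    exact subset_convexHull 𝕜 _ ⟨ht, hlevel t⟩
  have hp : p = 0 := by simpa [hv, hij] using congrFun hv_zero i
  have hq : q = 0 := by simpa [hv, hij.symm] using congrFun hv_zero j
  exact hpq.elim (· hp) (· hq)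

end OrderTopology

lemma eq_bound_or_eq_bound_of_mem_extremePoints {ι : Type*} [DecidableEq ι] {l u : ι → 𝕜}
    {f : (ι → 𝕜) → 𝕜} {c : 𝕜} {x : ι → 𝕜}
    (hx : x ∈ (convexHull 𝕜 {y | (∀ k, l k ≤ y k ∧ y k ≤ u k) ∧ f y = c}).extremePoints 𝕜)
    {i j : ι} (hij : i ≠ j) {α β : 𝕜}
    (hf : ∀ p q, f (x + (Pi.single i p + Pi.single j q)) = f x + (p * α + q * β)) :
    (x i = l i ∨ x i = u i) ∨ (x j = l j ∨ x j = u j) := by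
  let _ : TopologicalSpace 𝕜 := Preorder.topology 𝕜
  have _ : OrderTopology 𝕜 := ⟨rfl⟩
  have hbox : ∀ k, x k ∈ Icc (l k) (u k) := (extremePoints_convexHull_subset hx).1
  exact (notMem_interior_or_notMem_interior_of_mem_extremePoints
      (S := fun k => Icc (l k) (u k)) hx hij hf).imp
    (eq_or_eq_of_mem_Icc_of_notMem_interior (hbox i))
    (eq_or_eq_of_mem_Icc_of_notMem_interior (hbox j))

theorem extremePoints_box_det_surface_general (l u : Fin 4 → 𝕜) (c : 𝕜) :
    ∀ x ∈ Set.extremePoints 𝕜 (convexHull 𝕜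
      {x : Fin 4 → 𝕜 | (∀ i, l i ≤ x i ∧ x i ≤ u i) ∧ x 0 * x 1 + x 2 * x 3 = c}),
      ((x 0 = l 0 ∨ x 0 = u 0) ∧ (x 1 = l 1 ∨ x 1 = u 1)) ∨
        ((x 2 = l 2 ∨ x 2 = u 2) ∧ (x 3 = l 3 ∨ x 3 = u 3)) := by
  intro x hx
  let det : (Fin 4 → 𝕜) → 𝕜 := fun y => y 0 * y 1 + y 2 * y 3
  have at_bound (i j : Fin 4) (hij : i ≠ j) (α β : 𝕜)
      (hdet : ∀ p q, det (x + (Pi.single i p + Pi.single j q)) = det x + (p * α + q * β)) :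
      (x i = l i ∨ x i = u i) ∨ (x j = l j ∨ x j = u j) :=
    eq_bound_or_eq_bound_of_mem_extremePoints (f := det) hx hij hdet
  rw [or_and_left, and_or_right, and_or_right]
  refine ⟨⟨at_bound 0 2 (by decide) (x 1) (x 3) ?_, at_bound 1 2 (by decide) (x 0) (x 3) ?_⟩,
    ⟨at_bound 0 3 (by decide) (x 1) (x 2) ?_, at_bound 1 3 (by decide) (x 0) (x 2) ?_⟩⟩
  all_goals
    intro p q
    simp only [det, Pi.add_apply, Pi.single_apply, Fin.reduceEq, reduceIte]
    ring

end OrderedField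

/-- Extreme points of the convex hull of the set
`𝒳 = {x ∈ [l,u] : x₁x₂ + x₃x₄ = 1}` have the pair `(x₁,x₂)` or the pair
`(x₃,x₄)` at a corner of its box. -/
theorem extremePoints_box_det_surface (l u : Fin 4 → ℝ) (hlu : l ≤ u) :
    ∀ x ∈ Set.extremePoints ℝ (convexHull ℝ
      {x : Fin 4 → ℝ | (∀ i, l i ≤ x i ∧ x i ≤ u i) ∧ x 0 * x 1 + x 2 * x 3 = 1}),
      ((x 0 = l 0 ∨ x 0 = u 0) ∧ (x 1 = l 1 ∨ x 1 = u 1)) ∨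
        ((x 2 = l 2 ∨ x 2 = u 2) ∧ (x 3 = l 3 ∨ x 3 = u 3)) :=
  extremePoints_box_det_surface_general l u 1
end

section
/- Let β > 0 and 0 < p < q be real numbers, and let K = {(y, β/y) : y ∈ [p, q]} ⊆ ℝ². Then the convex hull of K equals the set {(y₁, y₂) ∈ ℝ² : p ≤ y₁ ≤ q, y₁·y₂ ≥ β, and y₂ ≤ β/p + ((β/q − β/p)/(q − p))·(y₁ − p)}. -/
/-!
On `[p, q]` the hull of the graph of a convex function is the region between the graph and its
secant. That region is convex, being an epigraph intersected with a hypograph, and it contains the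
graph because the secant joins two points of the convex epigraph. Conversely, each of its points
lies on a vertical segment from the graph to the secant, and both ends of that segment are in the
hull. The hyperbola is the graph of the convex function `y ↦ β / y` on the positive half-line.
-/

open Set

section OrderedSemiring

variable {𝕜 E F : Type*} [Semiring 𝕜] [PartialOrder 𝕜] [AddCommMonoid E] [SMul 𝕜 E]
  [AddCommMonoid F] [PartialOrder F] [IsOrderedAddMonoid F] [Module 𝕜 F] [PosSMulMono 𝕜 F]

theorem convex_setOf_mem_Icc {s : Set E} {f g : E → F} (hf : ConvexOn 𝕜 s f)
    (hg : ConcaveOn 𝕜 s g) : Convex 𝕜 {z : E × F | z.1 ∈ s ∧ z.2 ∈ Icc (f z.1) (g z.1)} := by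
  convert! hf.convex_epigraph.inter hg.convex_hypograph using 1
  ext z
  exact and_and_left

end OrderedSemiring

section OrderedModule

variable {𝕜 F : Type*} [Field 𝕜] [LinearOrder 𝕜] [AddCommGroup F] [Module 𝕜 F]

theorem prodMk_secant_mem_segment [IsStrictOrderedRing 𝕜] (f : 𝕜 → F) {p q x : 𝕜} (hpq : p < q)
    (hx : x ∈ Icc p q) :
    (x, f p + (x - p) • slope f p q) ∈ segment 𝕜 (p, f p) (q, f q) := by
  have hd : 0 < q - p := sub_pos.2 hpq
  rw [segment_eq_image']
  refine ⟨(x - p) / (q - p), ⟨div_nonneg (sub_nonneg.2 hx.1) hd.le,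
    (div_le_one hd).2 (sub_le_sub_right hx.2 p)⟩, Prod.ext ?_ ?_⟩
  · simp [div_mul_cancel₀ _ hd.ne']
  · simp [slope_def_module, smul_smul, div_eq_mul_inv]

variable [PartialOrder F] [IsOrderedAddMonoid F]

theorem concaveOn_secant (f : 𝕜 → F) (p q : 𝕜) {s : Set 𝕜} (hs : Convex 𝕜 s) :
    ConcaveOn 𝕜 s fun x ↦ f p + (x - p) • slope f p q := by
  refine (((LinearMap.toSpanSingleton 𝕜 F (slope f p q)).concaveOn hs).add_const
    (f p - p • slope f p q)).congr fun x _ ↦ ?_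
  simp only [Pi.add_apply, LinearMap.toSpanSingleton_apply]
  module

theorem le_secant_of_convexOn [IsStrictOrderedRing 𝕜] [PosSMulMono 𝕜 F] {s : Set 𝕜} {f : 𝕜 → F}
    {p q x : 𝕜} (hf : ConvexOn 𝕜 s f) (hp : p ∈ s) (hq : q ∈ s) (hpq : p < q) (hx : x ∈ Icc p q) :
    f x ≤ f p + (x - p) • slope f p q :=
  (hf.convex_epigraph.segment_subset ⟨hp, le_rfl⟩ ⟨hq, le_rfl⟩
    (prodMk_secant_mem_segment f hpq hx)).2

end OrderedModule

section OrderedField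

variable {𝕜 E : Type*} [Field 𝕜] [LinearOrder 𝕜] [IsStrictOrderedRing 𝕜]
  [AddCommGroup E] [Module 𝕜 E]

theorem prodMk_mem_of_convex_of_mem_Icc {s : Set (E × 𝕜)} (hs : Convex 𝕜 s) {x : E} {a b c : 𝕜}
    (ha : (x, a) ∈ s) (hc : (x, c) ∈ s) (hb : b ∈ Icc a c) : (x, b) ∈ s := by
  apply hs.segment_subset ha hc
  rw [← Prod.image_mk_segment_right, segment_eq_Icc (hb.1.trans hb.2)]
  exact mem_image_of_mem _ hb

theorem convexHull_graphOn_Icc {f : 𝕜 → 𝕜} {p q : 𝕜} (hpq : p < q)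
    (hf : ConvexOn 𝕜 (Icc p q) f) :
    convexHull 𝕜 ((Icc p q).graphOn f) =
      {z | z.1 ∈ Icc p q ∧ z.2 ∈ Icc (f z.1) (f p + (z.1 - p) • slope f p q)} := by
  have hp : p ∈ Icc p q := left_mem_Icc.2 hpq.le
  have hq : q ∈ Icc p q := right_mem_Icc.2 hpq.le
  apply Subset.antisymm
  · refine convexHull_min ?_ (convex_setOf_mem_Icc hf (concaveOn_secant f p q hf.1))
    rintro _ ⟨x, hx, rfl⟩
    exact ⟨hx, le_rfl, le_secant_of_convexOn hf hp hq hpq hx⟩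
  · rintro ⟨x, y⟩ ⟨hx, hy⟩
    have graph_mem {t : 𝕜} (ht : t ∈ Icc p q) : (t, f t) ∈ convexHull 𝕜 ((Icc p q).graphOn f) :=
      subset_convexHull 𝕜 _ (mem_image_of_mem _ ht)
    have hconv := convex_convexHull 𝕜 ((Icc p q).graphOn f)
    have secant_mem := hconv.segment_subset (graph_mem hp) (graph_mem hq)
      (prodMk_secant_mem_segment f hpq hx)
    exact prodMk_mem_of_convex_of_mem_Icc hconv (graph_mem hx) secant_mem hy

theorem convexOn_const_div {β : 𝕜} (hβ : 0 ≤ β) : ConvexOn 𝕜 (Ioi 0) fun y ↦ β / y := by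
  simpa only [zpow_neg_one, smul_eq_mul, div_eq_mul_inv] using (convexOn_zpow (-1)).smul hβ

theorem convexHull_hyperbola_arc_general {β p q : 𝕜} (hβ : 0 ≤ β) (hp : 0 < p) (hpq : p < q) :
    convexHull 𝕜 {z : 𝕜 × 𝕜 | ∃ y : 𝕜, p ≤ y ∧ y ≤ q ∧ z = (y, β / y)} =
      {z : 𝕜 × 𝕜 | p ≤ z.1 ∧ z.1 ≤ q ∧ β ≤ z.1 * z.2 ∧
        z.2 ≤ β / p + ((β / q - β / p) / (q - p)) * (z.1 - p)} := by
  have hconv : ConvexOn 𝕜 (Icc p q) fun y ↦ β / y :=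
    (convexOn_const_div hβ).subset (fun _ hy ↦ hp.trans_le hy.1) (convex_Icc p q)
  have harc : {z : 𝕜 × 𝕜 | ∃ y : 𝕜, p ≤ y ∧ y ≤ q ∧ z = (y, β / y)} =
      (Icc p q).graphOn fun y ↦ β / y := by
    ext z
    simp only [mem_ofPred_eq, graphOn, mem_image, mem_Icc, and_assoc, eq_comm]
  rw [harc, convexHull_graphOn_Icc hpq hconv]
  ext ⟨x, y⟩
  simp only [mem_ofPred_eq, mem_Icc, and_assoc, smul_eq_mul, slope_def_field, mul_comm (x - p)]
  refine and_congr_right fun hx ↦ and_congr_right fun _ ↦ and_congr_left fun _ ↦ ?_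
  exact div_le_iff₀' (hp.trans_le hx)

end OrderedField

/-- The convex hull of the arc `{(y, β/y) : y ∈ [p, q]}` of the hyperbola
`y₁ y₂ = β` (with `β > 0`, `0 < p < q`) is bounded below by the hyperbola and
above by the chord through the two endpoints. -/
theorem convexHull_hyperbola_arc (β p q : ℝ) (hβ : 0 < β) (hp : 0 < p) (hpq : p < q) :
    convexHull ℝ {z : ℝ × ℝ | ∃ y : ℝ, p ≤ y ∧ y ≤ q ∧ z = (y, β / y)} =
      {z : ℝ × ℝ | p ≤ z.1 ∧ z.1 ≤ q ∧ β ≤ z.1 * z.2 ∧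
        z.2 ≤ β / p + ((β / q - β / p) / (q - p)) * (z.1 - p)} :=
  convexHull_hyperbola_arc_general hβ.le hp hpq
end

section
/- Let β, l₁, u₁, l₂, u₂ be real numbers with β > 0, l₁ < 0 < u₁, l₂ < 0 < u₂, u₁·u₂ ≥ β, and l₁·l₂ ≥ β, and let K = {(y₁, y₂) ∈ [l₁,u₁]×[l₂,u₂] : y₁·y₂ = β}. Then every extreme point of the convex hull of K belongs to the set {(β/u₂, u₂), (u₁, β/u₁), (l₁, β/l₁), (β/l₂, l₂)}. -/
/-!
A point of one branch of the hyperbola lying strictly between two points `P`, `Q` of that branch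
belongs to the triangle spanned by `P`, `Q` and any point `N` of the other branch. If
`(a, β / a)` is a point of `K` in the open box, its branch leaves the box on either side of it, at
points `P` and `Q` of `K`, and the opposite branch supplies `N`. So `(a, β / a)` is a convex
combination of other points of `K` and is not extreme.
-/

open Set

section HyperbolaBox

variable {𝕜 : Type*} [Field 𝕜] [LinearOrder 𝕜] {β l₁ u₁ l₂ u₂ : 𝕜} {z : 𝕜 × 𝕜}

/-- The part `K` of the hyperbola `y₁ * y₂ = β` inside the box `[l₁, u₁] × [l₂, u₂]`. -/
def hyperbolaBox (β l₁ u₁ l₂ u₂ : 𝕜) : Set (𝕜 × 𝕜) :=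
  {z ∈ Icc l₁ u₁ ×ˢ Icc l₂ u₂ | z.1 * z.2 = β}

lemma mk_div_mem_hyperbolaBox {x : 𝕜} (hx : x ≠ 0) (hx₁ : x ∈ Icc l₁ u₁)
    (hx₂ : β / x ∈ Icc l₂ u₂) : (x, β / x) ∈ hyperbolaBox β l₁ u₁ l₂ u₂ :=
  ⟨⟨hx₁, hx₂⟩, mul_div_cancel₀ β hx⟩

variable [IsStrictOrderedRing 𝕜]

lemma neg_hyperbolaBox (β l₁ u₁ l₂ u₂ : 𝕜) :
    -hyperbolaBox β l₁ u₁ l₂ u₂ = hyperbolaBox β (-u₁) (-l₁) (-u₂) (-l₂) := by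
  ext z
  simp [hyperbolaBox, -Icc_prod_Icc, le_neg, neg_le, and_comm]

lemma mk_div_mem_convexHull_triple (β : 𝕜) {n p a q : 𝕜} (hn : n < 0) (hp : 0 < p) (hpa : p < a)
    (haq : a < q) :
    (a, β / a) ∈ convexHull 𝕜 {(n, β / n), (p, β / p), (q, β / q)} := by
  have ha : 0 < a := hp.trans hpa
  have hq : 0 < q := ha.trans haq
  have hqp : 0 < q - p := sub_pos.2 (hpa.trans haq)
  have han : 0 < a - n := sub_pos.2 (hn.trans ha)
  have hpn : 0 < p - n := sub_pos.2 (hn.trans hp)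
  have hqn : 0 < q - n := sub_pos.2 (hn.trans hq)
  -- The weight of a node `x` is `x / a` times its Lagrange basis polynomial evaluated at `a`:
  -- interpolating `x`, `x ^ 2` and `1` yields the weight sum and the two coordinates. Signs are
  -- moved so that every factor is positive.
  let w : Fin 3 → 𝕜 := ![-n / a * ((a - p) * (q - a) / ((p - n) * (q - n))),
    p / a * ((a - n) * (q - a) / ((p - n) * (q - p))),
    q / a * ((a - n) * (a - p) / ((q - n) * (q - p)))]
  have hw_nonneg : ∀ i, 0 ≤ w i := by
    have : 0 < -n := neg_pos.2 hn
    have : 0 < a - p := sub_pos.2 hpa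
    have : 0 < q - a := sub_pos.2 haq
    intro i
    fin_cases i <;> dsimp [w] <;> positivity
  have hw_sum : ∑ i, w i = 1 := by
    simp only [w, Fin.sum_univ_three, Matrix.cons_val]
    field_simp
    ring
  have hw_fst : w 0 * n + w 1 * p + w 2 * q = a := by
    dsimp [w]
    field_simp
    ring
  have hw_snd : w 0 * (β / n) + w 1 * (β / p) + w 2 * (β / q) = β / a := by
    have : n ≠ 0 := hn.ne
    dsimp [w]
    field_simp
    ring
  refine mem_convexHull_of_exists_fintype w ![(n, β / n), (p, β / p), (q, β / q)]
    hw_nonneg hw_sum (by simp [Fin.forall_fin_succ]) ?_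
  simp [Fin.sum_univ_three, hw_fst, hw_snd]

lemma neg_of_mul_le_mul_of_lt {a b c d : 𝕜} (hb : 0 < b) (hca : c < a) (hdb : d < b)
    (h : a * b ≤ c * d) : c < 0 := by
  by_contra! hc
  refine h.not_gt ?_
  calc
    c * d ≤ c * b := by gcongr
    _ < a * b := by gcongr

lemma mem_convexHull_hyperbolaBox_diff_of_pos (hpos : β ≤ u₁ * u₂) (hneg : β ≤ l₁ * l₂)
    (hz : z ∈ Ioo l₁ u₁ ×ˢ Ioo l₂ u₂) (hzβ : z.1 * z.2 = β) (hz₁ : 0 < z.1) (hz₂ : 0 < z.2) :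
    z ∈ convexHull 𝕜 (hyperbolaBox β l₁ u₁ l₂ u₂ \ {z}) := by
  obtain ⟨a, b⟩ := z
  obtain ⟨⟨hla, hau⟩, hlb, hbu⟩ := hz
  dsimp only at *
  have hβ : 0 < β := hzβ ▸ mul_pos hz₁ hz₂
  have hu₁ : 0 < u₁ := hz₁.trans hau
  have hu₂ : 0 < u₂ := hz₂.trans hbu
  have hl₁ : l₁ < 0 := neg_of_mul_le_mul_of_lt hz₂ hla hlb (hzβ.trans_le hneg)
  have hl₂ : l₂ < 0 := neg_of_mul_pos_right (hβ.trans_le hneg) hl₁.le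
  have hN : (l₁, β / l₁) ∈ hyperbolaBox β l₁ u₁ l₂ u₂ :=
    mk_div_mem_hyperbolaBox hl₁.ne ⟨le_rfl, (hla.trans hau).le⟩
      ⟨(le_div_iff_of_neg' hl₁).2 hneg, (div_neg_of_pos_of_neg hβ hl₁).le.trans hu₂.le⟩
  have hQ : (u₁, β / u₁) ∈ hyperbolaBox β l₁ u₁ l₂ u₂ :=
    mk_div_mem_hyperbolaBox hu₁.ne' ⟨(hla.trans hau).le, le_rfl⟩
      ⟨hl₂.le.trans (div_pos hβ hu₁).le, (div_le_iff₀' hu₁).2 hpos⟩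
  have hP : (β / u₂, β / (β / u₂)) ∈ hyperbolaBox β l₁ u₁ l₂ u₂ := by
    refine mk_div_mem_hyperbolaBox (div_pos hβ hu₂).ne'
      ⟨hl₁.le.trans (div_pos hβ hu₂).le, (div_le_iff₀ hu₂).2 hpos⟩ ?_
    rw [div_div_cancel₀ hβ.ne']
    exact ⟨(hlb.trans hbu).le, le_rfl⟩
  have hPa : β / u₂ < a := (div_lt_iff₀ hu₂).2 (hzβ ▸ by gcongr)
  obtain rfl : b = β / a := eq_div_of_mul_eq hz₁.ne' (by rwa [mul_comm])
  refine convexHull_mono ?_ (mk_div_mem_convexHull_triple β hl₁ (div_pos hβ hu₂) hPa hau)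
  rintro _ (rfl | rfl | rfl)
  · exact ⟨hN, fun h ↦ hla.ne (congrArg Prod.fst h)⟩
  · exact ⟨hP, fun h ↦ hPa.ne (congrArg Prod.fst h)⟩
  · exact ⟨hQ, fun h ↦ hau.ne' (congrArg Prod.fst h)⟩

lemma mem_convexHull_hyperbolaBox_diff (hβ : 0 < β) (hpos : β ≤ u₁ * u₂) (hneg : β ≤ l₁ * l₂)
    (hz : z ∈ Ioo l₁ u₁ ×ˢ Ioo l₂ u₂) (hzβ : z.1 * z.2 = β) :
    z ∈ convexHull 𝕜 (hyperbolaBox β l₁ u₁ l₂ u₂ \ {z}) := by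
  rcases pos_and_pos_or_neg_and_neg_of_mul_pos (hzβ ▸ hβ) with ⟨hz₁, hz₂⟩ | ⟨hz₁, hz₂⟩
  · exact mem_convexHull_hyperbolaBox_diff_of_pos hpos hneg hz hzβ hz₁ hz₂
  · have hdiff : -(hyperbolaBox β l₁ u₁ l₂ u₂ \ {z}) =
        hyperbolaBox β (-u₁) (-l₁) (-u₂) (-l₂) \ {-z} := by
      rw [← neg_hyperbolaBox, ← neg_singleton]
      rfl
    rw [← neg_mem_neg, ← convexHull_neg, hdiff]
    obtain ⟨⟨hl₁, hu₁⟩, hl₂, hu₂⟩ := hz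
    exact mem_convexHull_hyperbolaBox_diff_of_pos (by rwa [neg_mul_neg]) (by rwa [neg_mul_neg])
      ⟨⟨neg_lt_neg hu₁, neg_lt_neg hl₁⟩, neg_lt_neg hu₂, neg_lt_neg hl₂⟩
      ((neg_mul_neg _ _).trans hzβ) (neg_pos.2 hz₁) (neg_pos.2 hz₂)

theorem extremePoints_hyperbola_box_general (hβ : 0 < β) (hpos : β ≤ u₁ * u₂)
    (hneg : β ≤ l₁ * l₂) :
    (convexHull 𝕜 (hyperbolaBox β l₁ u₁ l₂ u₂)).extremePoints 𝕜 ⊆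
      {(β / u₂, u₂), (u₁, β / u₁), (l₁, β / l₁), (β / l₂, l₂)} := by
  intro z hz
  obtain ⟨⟨⟨hl₁, hu₁⟩, hl₂, hu₂⟩, hzβ⟩ := extremePoints_convexHull_subset hz
  have hz_not_mem : z ∉ convexHull 𝕜 (hyperbolaBox β l₁ u₁ l₂ u₂ \ {z}) := fun h ↦
    (((convex_convexHull 𝕜 _).mem_extremePoints_iff_mem_sdiff_convexHull_sdiff).1 hz).2
      (convexHull_mono (sdiff_subset_sdiff_left (subset_convexHull 𝕜 _)) h)
  have hz₁ : z.1 ≠ 0 := left_ne_zero_of_mul (hzβ.trans_ne hβ.ne')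
  have hz₂ : z.2 ≠ 0 := right_ne_zero_of_mul (hzβ.trans_ne hβ.ne')
  have hfst : z = (z.1, β / z.1) := Prod.ext rfl (by rw [← hzβ, mul_div_cancel_left₀ _ hz₁])
  have hsnd : z = (β / z.2, z.2) := Prod.ext (by rw [← hzβ, mul_div_cancel_right₀ _ hz₂]) rfl
  by_contra hne
  simp only [mem_insert_iff, mem_singleton_iff, not_or] at hne
  obtain ⟨hne_u₂, hne_u₁, hne_l₁, hne_l₂⟩ := hne
  exact hz_not_mem <| mem_convexHull_hyperbolaBox_diff hβ hpos hneg
    ⟨⟨hl₁.lt_of_ne fun h ↦ hne_l₁ (h ▸ hfst), hu₁.lt_of_ne fun h ↦ hne_u₁ (h ▸ hfst)⟩,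
      hl₂.lt_of_ne fun h ↦ hne_l₂ (h ▸ hsnd), hu₂.lt_of_ne fun h ↦ hne_u₂ (h ▸ hsnd)⟩ hzβ

end HyperbolaBox

/-- In the "polytope" case, when the bound box intersects the hyperbola
`y₁ y₂ = β` in both the positive and negative orthants, the extreme points of
the convex hull of `K = {(y₁,y₂) ∈ [l₁,u₁]×[l₂,u₂] : y₁y₂ = β}` are among the
four points `(β/u₂, u₂)`, `(u₁, β/u₁)`, `(l₁, β/l₁)`, `(β/l₂, l₂)`. -/
theorem extremePoints_hyperbola_box (β l₁ u₁ l₂ u₂ : ℝ) (hβ : 0 < β)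
    (hl₁ : l₁ < 0) (hu₁ : 0 < u₁) (hl₂ : l₂ < 0) (hu₂ : 0 < u₂)
    (hpos : β ≤ u₁ * u₂) (hneg : β ≤ l₁ * l₂) :
    ∀ z ∈ Set.extremePoints ℝ (convexHull ℝ
      {z : ℝ × ℝ | l₁ ≤ z.1 ∧ z.1 ≤ u₁ ∧ l₂ ≤ z.2 ∧ z.2 ≤ u₂ ∧ z.1 * z.2 = β}),
      z ∈ ({(β / u₂, u₂), (u₁, β / u₁), (l₁, β / l₁), (β / l₂, l₂)} :
        Set (ℝ × ℝ)) := by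
  simpa [hyperbolaBox, -Icc_prod_Icc, subset_def, and_assoc] using
    extremePoints_hyperbola_box_general hβ hpos hneg
end
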